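/- The group of invertible elements of D+K is norm dense in D+K (D+K has stable rank one), and the self-adjoint invertible elements of D+K are dense in the self-adjoint part of D+K. -/

import Mathlib

/-!
Both density claims come from one construction. Write `T = D + K`.

* A compact operator is a norm limit of finite-rank ones (project onto the span of a finite net of
  the image of the unit ball), so `K` may be replaced by some `F` of finite rank. If `T` is
  self-adjoint, then the real part of `D + F` is still as close to `T` as `D + F` is, and it is
  again the sum of a diagonal operator and a finite-rank operator, now both self-adjoint.
* Replacing the small diagonal entries of `D` by a small positive constant gives an invertible
  diagonal operator `D'` near `D`, self-adjoint if `D` is.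
* `D' + s F = D' (1 + s D'⁻¹ F)`. The finite-rank operator `D'⁻¹ F` has only finitely many
  eigenvalues, so `-s⁻¹` is not one of them for some real `s > 1` arbitrarily close to `1`; by the
  Fredholm alternative `1 + s D'⁻¹ F` is then invertible, and `D' + s F` is the required
  perturbation.
-/

open scoped InnerProductSpace
open ContinuousLinearMap

variable {H : Type*} [NormedAddCommGroup H] [InnerProductSpace ℂ H] [CompleteSpace H]

/-- An operator is diagonal with respect to the fixed orthonormal (Hilbert) basis `e`. -/
def IsDiagonal (e : HilbertBasis ℕ ℂ H) (T : H →L[ℂ] H) : Prop :=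
  ∀ n m : ℕ, n ≠ m → ⟪e m, T (e n)⟫_ℂ = 0

/-- The set `D + K` of sums of a diagonal operator and a compact operator. -/
def DplusK (e : HilbertBasis ℕ ℂ H) : Set (H →L[ℂ] H) :=
  {T | ∃ D K : H →L[ℂ] H, IsDiagonal e D ∧ IsCompactOperator ⇑K ∧ T = D + K}

/-! ### Diagonal operators -/

section Diagonal

/-- Multiplication of the `e`-coordinates by a bounded sequence is a bounded operator. -/
lemma exists_diagonal_operator (e : HilbertBasis ℕ ℂ H) (c : ℕ → ℂ) (M : ℝ)
    (hc : ∀ n, ‖c n‖ ≤ M) :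
    ∃ A : H →L[ℂ] H, (∀ n, A (e n) = c n • e n) ∧ ‖A‖ ≤ M := by
  have hM : 0 ≤ M := (norm_nonneg _).trans (hc 0)
  have hb : ∀ (x : H) (n : ℕ), ‖c n * e.repr x n‖ ≤ ‖((M : ℂ) • e.repr x) n‖ := by
    intro x n
    simp only [lp.coeFn_smul, Pi.smul_apply, norm_smul, norm_mul, Complex.norm_real,
      Real.norm_of_nonneg hM]
    exact mul_le_mul_of_nonneg_right (hc n) (norm_nonneg _)
  have hmem : ∀ x : H, Memℓp (fun n => c n * e.repr x n) 2 := fun x =>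
    Memℓp.mono' (lp.memℓp ((M : ℂ) • e.repr x)) (hb x)
  let m : H → lp (fun _ : ℕ => ℂ) 2 := fun x => ⟨fun n => c n * e.repr x n, hmem x⟩
  let L : H →ₗ[ℂ] H :=
    { toFun := fun x => e.repr.symm (m x)
      map_add' := by
        intro x y
        rw [← map_add]
        congr 1
        ext n
        exact (congrArg (c n * ·) (by simp)).trans (mul_add _ _ _)
      map_smul' := by
        intro a x
        rw [← map_smul]
        congr 1
        ext n
        simp [m, mul_left_comm] }
  refine ⟨L.mkContinuous M ?_, ?_, L.mkContinuous_norm_le hM _⟩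
  · intro x
    have h1 : ‖m x‖ ≤ ‖(M : ℂ) • e.repr x‖ := lp.norm_mono (by norm_num) (hb x)
    have h2 : ‖L x‖ = ‖m x‖ := e.repr.symm.norm_map _
    rw [h2]
    rwa [lp.norm_const_smul (by norm_num), Complex.norm_real, Real.norm_of_nonneg hM,
      e.repr.norm_map] at h1
  · intro n
    change e.repr.symm (m (e n)) = _
    apply e.repr.injective
    rw [LinearIsometryEquiv.apply_symm_apply, map_smul]
    ext k
    by_cases h : k = n
    · subst h; simp [m]
    · simp [m, HilbertBasis.repr_self, h]

lemma ext_on_basis (e : HilbertBasis ℕ ℂ H) {A B : H →L[ℂ] H} (h : ∀ n, A (e n) = B (e n)) :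
    A = B := by
  refine ContinuousLinearMap.ext_on (s := Set.range e) ?_ ?_
  · rw [Submodule.dense_iff_topologicalClosure_eq_top]
    exact e.dense_span
  · rintro _ ⟨n, rfl⟩
    exact h n

lemma ext_inner_basis (e : HilbertBasis ℕ ℂ H) {x y : H}
    (h : ∀ m, ⟪e m, x⟫_ℂ = ⟪e m, y⟫_ℂ) : x = y := by
  apply e.repr.injective
  ext m
  rw [e.repr_apply_apply, e.repr_apply_apply, h]

lemma inner_basis (e : HilbertBasis ℕ ℂ H) (m n : ℕ) :
    ⟪e m, e n⟫_ℂ = if m = n then 1 else 0 :=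
  orthonormal_iff_ite.mp e.orthonormal m n

lemma IsDiagonal.apply_basis {e : HilbertBasis ℕ ℂ H} {D : H →L[ℂ] H} (hD : IsDiagonal e D)
    (n : ℕ) : D (e n) = ⟪e n, D (e n)⟫_ℂ • e n := by
  apply ext_inner_basis e
  intro m
  rw [inner_smul_right, inner_basis]
  by_cases h : m = n
  · subst h; simp
  · simp [h, hD n m (Ne.symm h)]

lemma isDiagonal_of_apply_basis (e : HilbertBasis ℕ ℂ H) {D : H →L[ℂ] H} {d : ℕ → ℂ}
    (hD : ∀ n, D (e n) = d n • e n) : IsDiagonal e D := by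
  intro n m h
  rw [hD, inner_smul_right, inner_basis, if_neg h.symm, mul_zero]

/-- A diagonal operator with real entries is self-adjoint. -/
lemma isSelfAdjoint_of_apply_basis (e : HilbertBasis ℕ ℂ H) {D : H →L[ℂ] H} {d : ℕ → ℂ}
    (hD : ∀ n, D (e n) = d n • e n) (hd : ∀ n, star (d n) = d n) : IsSelfAdjoint D := by
  rw [ContinuousLinearMap.isSelfAdjoint_iff']
  apply ext_on_basis e
  intro n
  apply ext_inner_basis e
  intro m
  rw [ContinuousLinearMap.adjoint_inner_right, hD, hD, inner_smul_left, inner_smul_right,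
    inner_basis]
  by_cases h : m = n
  · subst h
    simpa using hd m
  · simp [h]

/-- Small diagonal entries can be replaced by a small positive constant: a diagonal operator is
close to an invertible diagonal one, which is self-adjoint if the original operator is. -/
lemma exists_invertible_diagonal (e : HilbertBasis ℕ ℂ H) {D : H →L[ℂ] H} (hD : IsDiagonal e D)
    {ε : ℝ} (hε : 0 < ε) :
    ∃ D' : H →L[ℂ] H, IsDiagonal e D' ∧ IsUnit D' ∧ ‖D - D'‖ ≤ 2 * ε ∧
      (IsSelfAdjoint D → IsSelfAdjoint D') := by
  set d : ℕ → ℂ := fun n => ⟪e n, D (e n)⟫_ℂ with hd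
  have hDe : ∀ n, D (e n) = d n • e n := hD.apply_basis
  let c : ℕ → ℂ := fun n => if ‖d n‖ < ε then (ε : ℂ) else d n
  have hcε : ∀ n, ε ≤ ‖c n‖ := by
    intro n
    by_cases h : ‖d n‖ < ε
    · simp [c, h, abs_of_pos hε]
    · simpa only [c, h, if_false] using not_lt.mp h
  have hc0 : ∀ n, c n ≠ 0 := fun n => norm_pos_iff.mp (hε.trans_le (hcε n))
  have hdc : ∀ n, ‖d n - c n‖ ≤ 2 * ε := by
    intro n
    by_cases h : ‖d n‖ < ε
    · simp only [c, h, if_true]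
      refine (norm_sub_le _ _).trans ?_
      rw [Complex.norm_real, Real.norm_of_nonneg hε.le]
      linarith
    · simp [c, h, hε.le]
  obtain ⟨E, hE, hEn⟩ := exists_diagonal_operator e (fun n => d n - c n) _ hdc
  obtain ⟨A, hA, -⟩ := exists_diagonal_operator e (fun n => (c n)⁻¹) ε⁻¹ (by
    intro n
    rw [norm_inv]
    exact inv_anti₀ hε (hcε n))
  have hD' : ∀ n, (D - E) (e n) = c n • e n := by
    intro n
    rw [sub_apply, hDe, hE, ← sub_smul, sub_sub_cancel]
  refine ⟨D - E, isDiagonal_of_apply_basis e hD', ?_, by simpa using hEn, ?_⟩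
  · refine ⟨⟨D - E, A, ?_, ?_⟩, rfl⟩
    · apply ext_on_basis e
      intro n
      rw [mul_apply_eq_comp, hA, map_smul, hD', smul_smul, inv_mul_cancel₀ (hc0 n)]
      simp
    · apply ext_on_basis e
      intro n
      rw [mul_apply_eq_comp, hD', map_smul, hA, smul_smul, mul_inv_cancel₀ (hc0 n)]
      simp
  · intro hs
    refine isSelfAdjoint_of_apply_basis e hD' ?_
    intro n
    have hreal : star (d n) = d n := by
      have h1 : star (d n) = ⟪D (e n), e n⟫_ℂ := inner_conj_symm _ _
      rw [h1, ← ContinuousLinearMap.adjoint_inner_right,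
        (ContinuousLinearMap.isSelfAdjoint_iff').mp hs]
    by_cases h : ‖d n‖ < ε
    · simp [c, h]
    · simpa [c, h] using hreal

end Diagonal

/-! ### Finite-rank operators -/

section FiniteRank

/-- A compact operator is within `ε` of its compression `P K` to a finite-dimensional range. -/
lemma exists_projection_approx {K : H →L[ℂ] H} (hK : IsCompactOperator ⇑K) {ε : ℝ} (hε : 0 < ε) :
    ∃ (V : Submodule ℂ H) (_ : FiniteDimensional ℂ V), ‖K - V.starProjection * K‖ ≤ ε := by
  obtain ⟨C, hC, hKC⟩ := IsCompactOperator.image_closedBall_subset_compact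
    (f := (K : H →ₗ[ℂ] H)) hK 1
  obtain ⟨t, -, htf, ht⟩ := hC.finite_cover_balls hε
  have hfin : FiniteDimensional ℂ (Submodule.span ℂ t) := FiniteDimensional.span_of_finite ℂ htf
  refine ⟨Submodule.span ℂ t, hfin, ?_⟩
  refine ContinuousLinearMap.opNorm_le_of_unit_norm (𝕜 := ℂ) hε.le ?_
  intro x hx
  have hxC : K x ∈ C := hKC ⟨x, by simp [hx], rfl⟩
  obtain ⟨y, hyt, hy⟩ := Set.mem_iUnion₂.mp (ht hxC)
  have hyV : y ∈ Submodule.span ℂ t := Submodule.subset_span hyt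
  change ‖K x - (Submodule.span ℂ t).starProjection (K x)‖ ≤ ε
  rw [Submodule.starProjection_minimal]
  refine (ciInf_le ⟨0, ?_⟩ (⟨y, hyV⟩ : Submodule.span ℂ t)).trans ?_
  · rintro _ ⟨z, rfl⟩
    exact norm_nonneg _
  · rw [← dist_eq_norm]
    exact (Metric.mem_ball.mp hy).le

lemma isCompactOperator_of_finite_rank {F : H →L[ℂ] H} (W : Submodule ℂ H)
    [FiniteDimensional ℂ W] (hF : ∀ x, F x ∈ W) : IsCompactOperator ⇑F := by
  have : LocallyCompactSpace W := by
    have := FiniteDimensional.proper ℂ W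
    infer_instance
  have h := (isCompactOperator_id (E := W)).comp_clm (F.codRestrict W hF)
  exact h.clm_comp W.subtypeL

/-- Eigenvectors for nonzero eigenvalues lie in the range, so these are eigenvalues of the
restriction of `G` to the finite-dimensional space `W`. -/
lemma finite_eigenvalues_of_finite_rank {G : H →L[ℂ] H} (W : Submodule ℂ H)
    [FiniteDimensional ℂ W] (hG : ∀ x, G x ∈ W) :
    {μ : ℂ | μ ≠ 0 ∧ Module.End.HasEigenvalue (G : Module.End ℂ H) μ}.Finite := by
  let g : Module.End ℂ W := (G : Module.End ℂ H).restrict (fun x _ => hG x)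
  refine (Module.End.finite_hasEigenvalue g).subset ?_
  rintro μ ⟨hμ, h⟩
  obtain ⟨v, hv⟩ := h.exists_hasEigenvector
  have hGv : G v = μ • v := hv.apply_eq_smul
  have hvW : v ∈ W := by
    have := W.smul_mem μ⁻¹ (hG v)
    rwa [hGv, smul_smul, inv_mul_cancel₀ hμ, one_smul] at this
  refine Module.End.hasEigenvalue_of_hasEigenvector (x := ⟨v, hvW⟩)
    (Module.End.hasEigenvector_iff.mpr ⟨?_, ?_⟩)
  · rw [Module.End.mem_eigenspace_iff]
    exact Subtype.ext hGv
  · intro h0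
    exact hv.2 (congrArg Subtype.val h0)

/-- As `G` has finitely many nonzero eigenvalues, the Fredholm alternative makes `1 + s G`
invertible for all but finitely many real `s > 1`. -/
lemma exists_isUnit_one_add_smul {G : H →L[ℂ] H} (W : Submodule ℂ H)
    [FiniteDimensional ℂ W] (hG : ∀ x, G x ∈ W) {δ : ℝ} (hδ : 0 < δ) :
    ∃ s : ℝ, 1 < s ∧ s < 1 + δ ∧ IsUnit (1 + (s : ℂ) • G) := by
  have hinj : Function.Injective (fun s : ℝ => -((s : ℂ))⁻¹) := by
    intro a b h
    simpa using h
  have hfin := (finite_eigenvalues_of_finite_rank W hG).preimage (hinj.injOn)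
  obtain ⟨s, ⟨hs1, hs2⟩, hs⟩ :=
    (Set.Ioo_infinite (show (1 : ℝ) < 1 + δ by linarith)).exists_notMem_finite hfin
  refine ⟨s, hs1, hs2, ?_⟩
  have hs0 : (s : ℂ) ≠ 0 := by
    exact_mod_cast (zero_lt_one.trans hs1).ne'
  have hμ : -((s : ℂ))⁻¹ ≠ 0 := neg_ne_zero.mpr (inv_ne_zero hs0)
  have hres := ((isCompactOperator_of_finite_rank W hG).hasEigenvalue_or_mem_resolventSet
    hμ).resolve_left (fun h => hs ⟨hμ, h⟩)
  rw [spectrum.mem_resolventSet_iff] at hres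
  have hu := hres.smul (Units.mk0 (-(s : ℂ)) (neg_ne_zero.mpr hs0))
  convert hu using 1
  rw [Units.smul_mk0, smul_sub, Algebra.algebraMap_eq_smul_one, smul_smul, neg_mul_neg,
    mul_inv_cancel₀ hs0, one_smul, neg_smul, sub_neg_eq_add]

end FiniteRank

/-! ### Density of the invertible elements -/

/-- The common core of both density statements: a diagonal plus finite-rank operator is close to
an invertible one, of the form `D' + s F` with `D'` diagonal and `s` real. -/
lemma exists_unit_near (e : HilbertBasis ℕ ℂ H) {D F : H →L[ℂ] H} (hD : IsDiagonal e D)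
    (W : Submodule ℂ H) [FiniteDimensional ℂ W] (hF : ∀ x, F x ∈ W) {ε : ℝ} (hε : 0 < ε) :
    ∃ S ∈ DplusK e, IsUnit S ∧ ‖D + F - S‖ < ε ∧
      (IsSelfAdjoint D → IsSelfAdjoint F → IsSelfAdjoint S) := by
  obtain ⟨D', hD', ⟨u, rfl⟩, hnear, hsa⟩ :=
    exists_invertible_diagonal e hD (show 0 < ε / 4 by linarith)
  let A : H →L[ℂ] H := (↑u⁻¹ : H →L[ℂ] H)
  have hGW : ∀ x, (A * F) x ∈ W.map (A : H →ₗ[ℂ] H) := fun x => ⟨F x, hF x, rfl⟩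
  have hδ : 0 < ε / (2 * (‖F‖ + 1)) := by positivity
  obtain ⟨s, hs1, hs2, hs⟩ := exists_isUnit_one_add_smul _ hGW hδ
  have hfac : (u : H →L[ℂ] H) * (1 + (s : ℂ) • (A * F)) = u + (s : ℂ) • F := by
    rw [mul_add, mul_one, mul_smul_comm, ← mul_assoc, Units.mul_inv, one_mul]
  refine ⟨u + (s : ℂ) • F, ⟨u, (s : ℂ) • F, hD', ?_, rfl⟩, ?_, ?_, ?_⟩
  · exact (isCompactOperator_of_finite_rank W hF).smul (s : ℂ)
  · rw [← hfac]
    exact u.isUnit.mul hs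
  · have h1 : D + F - (u + (s : ℂ) • F) = (D - u) + ((1 - s : ℝ) : ℂ) • F := by
      push_cast
      rw [sub_smul, one_smul]
      abel
    have h2 : ‖((1 - s : ℝ) : ℂ) • F‖ < ε / 2 := by
      rw [norm_smul, Complex.norm_real, Real.norm_eq_abs, abs_of_neg (by linarith)]
      have h3 : -(1 - s) * ‖F‖ ≤ (s - 1) * (‖F‖ + 1) := by nlinarith [norm_nonneg F]
      have h4 : (s - 1) * (‖F‖ + 1) < ε / (2 * (‖F‖ + 1)) * (‖F‖ + 1) :=
        mul_lt_mul_of_pos_right (by linarith) (by positivity)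
      have h5 : ε / (2 * (‖F‖ + 1)) * (‖F‖ + 1) = ε / 2 := by
        have : ‖F‖ + 1 ≠ 0 := by positivity
        field_simp
      linarith
    rw [h1]
    have := norm_add_le (D - u) (((1 - s : ℝ) : ℂ) • F)
    linarith
  · intro hDs hFs
    refine (hsa hDs).add (IsSelfAdjoint.smul ?_ hFs)
    exact Complex.conj_ofReal s

/-- Invertible elements of `D+K` are norm dense in `D+K` (stable rank one), and self-adjoint
invertible elements are dense in the self-adjoint part of `D+K`. -/
theorem invertibles_dense (e : HilbertBasis ℕ ℂ H) :
    (∀ T ∈ DplusK e, ∀ ε > (0 : ℝ), ∃ S ∈ DplusK e, IsUnit S ∧ ‖T - S‖ < ε) ∧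
    (∀ T ∈ DplusK e, IsSelfAdjoint T → ∀ ε > (0 : ℝ),
      ∃ S ∈ DplusK e, IsSelfAdjoint S ∧ IsUnit S ∧ ‖T - S‖ < ε) := by
  constructor
  · rintro T ⟨D, K, hD, hK, rfl⟩ ε hε
    obtain ⟨V, hV, hVK⟩ := exists_projection_approx hK (half_pos hε)
    obtain ⟨S, hS, hSu, hSn, -⟩ := exists_unit_near e (F := V.starProjection * K) hD V
      (fun x => V.starProjection_apply_mem (K x)) (half_pos hε)
    refine ⟨S, hS, hSu, ?_⟩
    have h1 : D + K - S = (K - V.starProjection * K) + (D + V.starProjection * K - S) := by abel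
    rw [h1]
    exact (norm_add_le _ _).trans_lt (by linarith)
  · rintro T ⟨D, K, hD, hK, rfl⟩ hT ε hε
    obtain ⟨V, hV, hVK⟩ := exists_projection_approx hK (half_pos hε)
    set F := V.starProjection * K with hF
    have hFstar : ∀ x, (star F) x ∈ V.map ((star K : H →L[ℂ] H) : H →ₗ[ℂ] H) := by
      intro x
      have : star F = star K * V.starProjection := by
        rw [hF, star_mul, (isSelfAdjoint_starProjection V).star_eq]
      rw [this]
      exact ⟨V.starProjection x, V.starProjection_apply_mem x, rfl⟩
    let W := V ⊔ V.map ((star K : H →L[ℂ] H) : H →ₗ[ℂ] H)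
    let r : ℂ := ((1 / 2 : ℝ) : ℂ)
    have hr : IsSelfAdjoint r := Complex.conj_ofReal _
    have hD1 : IsDiagonal e (r • (D + star D)) := by
      intro n m h
      have h2 : ⟪e m, (star D) (e n)⟫_ℂ = 0 := by
        rw [ContinuousLinearMap.star_eq_adjoint, ContinuousLinearMap.adjoint_inner_right,
          ← inner_conj_symm, hD m n h.symm, map_zero]
      rw [smul_apply, add_apply, inner_smul_right,
        inner_add_right, hD n m h, h2, add_zero, mul_zero]
    have hF1 : ∀ x, (r • (F + star F)) x ∈ W := fun x =>
      W.smul_mem r (W.add_mem (Submodule.mem_sup_left (V.starProjection_apply_mem (K x)))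
        (Submodule.mem_sup_right (hFstar x)))
    obtain ⟨S, hS, hSu, hSn, hSs⟩ := exists_unit_near e hD1 W hF1 (half_pos hε)
    refine ⟨S, hS, hSs (hr.smul (IsSelfAdjoint.add_star_self D))
      (hr.smul (IsSelfAdjoint.add_star_self F)), hSu, ?_⟩
    -- As `D + K` is its own real part, its distance to the real part of `D + F` is at most
    -- `‖K - F‖`.
    have hhalf : r • ((D + K) + star (D + K)) = D + K := by
      rw [hT.star_eq, ← two_smul ℂ (D + K), smul_smul]
      simp [r]
    have h1 : D + K - S = r • ((K - F) + star (K - F))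
        + (r • (D + star D) + r • (F + star F) - S) := by
      conv_lhs => rw [← hhalf]
      simp only [star_add, star_sub, smul_add, smul_sub]
      abel
    have h2 : ‖r • ((K - F) + star (K - F))‖ ≤ ε / 2 := by
      have h3 := norm_add_le (K - F) (star (K - F))
      rw [norm_star] at h3
      rw [norm_smul, Complex.norm_real, Real.norm_of_nonneg (by norm_num)]
      linarith
    rw [h1]
    exact (norm_add_le _ _).trans_lt (by linarith)
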